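/- arXiv:1407.3500 — 4 statements merged into one kernel-verified Lean document; each statement's English description precedes it below -/
import Mathlib

section
/- Let f : 𝔽₂ⁿ → {1,−1} be a Boolean function with Fourier sparsity s, let γ₁,…,γ_d be linearly independent linear forms with 𝔽₂-span H, and let l be the number of cosets of H meeting Supp(f̂). Suppose b ∈ 𝔽₂^d is such that the restriction g = f|_{V_b} to V_b = {x : γᵢ(x)=bᵢ} has Fourier sparsity k, and suppose there are further linear forms δ₁,…,δ_m and values c₁,…,c_m ∈ 𝔽₂ such that f is constant on the nonempty affine subspace {x ∈ V_b : δ₁(x)=c₁,…,δ_m(x)=c_m}. Let H' be the 𝔽₂-span of {γ₁,…,γ_d, δ₁,…,δ_m}, and let l' be the number of cosets of H' meeting Supp(f̂). Then l' ≤ l − (k−1)/2. -/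
/-!
The proof compares the Fourier transform of `f` with that of its restriction `g = f ∘ P`,
`P y = x₀ + L y`. Let `π : DualF n → DualF (n - d)` be precomposition with `L`; since the range of `L`
is the common kernel of the `γᵢ`, the kernel of `π` is `H`. Hence `l` is the size of
`B = π(Supp f̂)`, and `l'` is the number of cosets of `K = π(H')` that meet `B`.

Everything rests on one Poisson summation formula, `sum_coset_fCoeff`: the signed sum of the Fourier
coefficients over a coset `α + K` is a multiple of the sum of `f · χ_α` over a translate of the
annihilator of `K`. Applied to `f` and `H`, it shows `A = Supp ĝ ⊆ B`. Applied to `g` and `K`, it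
shows that the signed sum of `ĝ` over a nontrivial coset of `K` vanishes, because `g` is constant on
the corresponding affine subspace; so no nontrivial coset of `K` contains exactly one point of `A`.

A coset `D` meeting `B` therefore satisfies `2 + |A ∩ D| ≤ 2 |B ∩ D|`, with an extra `1` allowed on
the right for the trivial coset. Summing over `D` gives `2 l' + k ≤ 2 l + 1`, which is the claim.
-/

/-- The dual space of `𝔽₂ⁿ`: linear forms `𝔽₂ⁿ → 𝔽₂`. -/
abbrev DualF (n : ℕ) : Type := (Fin n → ZMod 2) →ₗ[ZMod 2] ZMod 2

/-- A Boolean function takes values in `{1, -1} ⊆ ℝ`. -/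
def IsBooleanFn (n : ℕ) (f : (Fin n → ZMod 2) → ℝ) : Prop :=
  ∀ x, f x = 1 ∨ f x = -1

/-- Fourier coefficient `f̂(γ) = 2⁻ⁿ Σ_x f(x) (-1)^(γ x)`. -/
noncomputable def fCoeff (n : ℕ) (f : (Fin n → ZMod 2) → ℝ) (γ : DualF n) : ℝ :=
  (2 ^ n : ℝ)⁻¹ * ∑ x : Fin n → ZMod 2, f x * (-1 : ℝ) ^ (γ x).val

/-- Fourier support. -/
noncomputable def fSupp (n : ℕ) (f : (Fin n → ZMod 2) → ℝ) : Set (DualF n) :=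
  {γ | fCoeff n f γ ≠ 0}

/-- Fourier sparsity. -/
noncomputable def fSpar (n : ℕ) (f : (Fin n → ZMod 2) → ℝ) : ℕ :=
  (fSupp n f).ncard

/-- Fourier dimension: dimension of the 𝔽₂-span of the Fourier support. -/
noncomputable def fDim (n : ℕ) (f : (Fin n → ZMod 2) → ℝ) : ℕ :=
  Module.finrank (ZMod 2) (Submodule.span (ZMod 2) (fSupp n f))

/-- `P` is an (injective) affine-linear parametrization of the affine subspace
`{x : γ₁ x = b₁, …, γ_d x = b_d}` by `𝔽₂^(n-d)`. -/
def IsAffineParam (n d : ℕ) (γ : Fin d → DualF n) (b : Fin d → ZMod 2)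
    (P : (Fin (n - d) → ZMod 2) → (Fin n → ZMod 2)) : Prop :=
  (∃ (L : (Fin (n - d) → ZMod 2) →ₗ[ZMod 2] (Fin n → ZMod 2)) (x₀ : Fin n → ZMod 2),
      P = fun y => x₀ + L y) ∧
  Function.Injective P ∧
  Set.range P = {x | ∀ i, γ i x = b i}

/-- The nontrivial character `a ↦ (-1)^a` of `𝔽₂`, with real values. -/
noncomputable def sgn (a : ZMod 2) : ℝ := (-1 : ℝ) ^ a.val

theorem sgn_zero : sgn 0 = 1 := by simp [sgn]

theorem sgn_add (a b : ZMod 2) : sgn (a + b) = sgn a * sgn b := by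
  unfold sgn
  rw [ZMod.val_add, ← neg_one_pow_eq_pow_mod_two, pow_add]

theorem sgn_ne_zero (a : ZMod 2) : sgn a ≠ 0 := by simp [sgn]

theorem sgn_of_ne_zero {a : ZMod 2} (h : a ≠ 0) : sgn a = -1 := by
  have h1 : a.val = 1 := by revert h; revert a; decide
  rw [sgn, h1, pow_one]

theorem sum_eq_zero_of_neg {ι : Type*} [Fintype ι] (e : ι ≃ ι) (F : ι → ℝ)
    (h : ∀ i, F (e i) = -F i) : ∑ i, F i = 0 := by
  have h1 := Equiv.sum_comp e F
  simp only [h, Finset.sum_neg_distrib] at h1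
  linarith

open Classical in
/-- Orthogonality of characters: the forms in `K`, viewed as characters, sum to zero at `z` unless
`z` is annihilated by `K`. -/
theorem sum_sgn_submodule {n : ℕ} (K : Submodule (ZMod 2) (DualF n)) [Fintype K]
    (z : Fin n → ZMod 2) :
    ∑ h : K, sgn (h.1 z) = if ∀ h ∈ K, h z = 0 then (Fintype.card K : ℝ) else 0 := by
  split_ifs with hz
  · rw [Finset.sum_congr rfl (fun h _ => by rw [hz h.1 h.2, sgn_zero])]
    simp
  · push Not at hz
    obtain ⟨h₀, hK, h0⟩ := hz
    refine sum_eq_zero_of_neg (Equiv.addRight (⟨h₀, hK⟩ : K)) _ fun h => ?_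
    simp [sgn_add, sgn_of_ne_zero h0]

open Classical in
/-- Poisson summation for the coset `α + K`. The condition on `x` says that `x` lies in the translate by
`x₀` of the annihilator of `K`, since `x + x₀ = x - x₀` in characteristic two. -/
theorem sum_coset_fCoeff {n : ℕ} (f : (Fin n → ZMod 2) → ℝ) (K : Submodule (ZMod 2) (DualF n))
    [Fintype K] (α : DualF n) (x₀ : Fin n → ZMod 2) :
    ∑ h : K, fCoeff n f (α + h.1) * sgn (h.1 x₀) =
      (2 ^ n : ℝ)⁻¹ * Fintype.card K *
        ∑ x, if ∀ h ∈ K, h (x + x₀) = 0 then f x * sgn (α x) else 0 := by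
  have h1 : ∀ h : K, fCoeff n f (α + h.1) * sgn (h.1 x₀) =
      (2 ^ n : ℝ)⁻¹ * ∑ x, f x * sgn (α x) * sgn (h.1 (x + x₀)) := by
    intro h
    have h2 : fCoeff n f (α + h.1) = (2 ^ n : ℝ)⁻¹ * ∑ x, f x * sgn ((α + h.1) x) := rfl
    rw [h2, mul_assoc, Finset.sum_mul]
    congr 1
    refine Finset.sum_congr rfl fun x _ => ?_
    rw [LinearMap.add_apply, map_add, sgn_add, sgn_add]
    ring
  rw [Finset.sum_congr rfl (fun h _ => h1 h), ← Finset.mul_sum, Finset.sum_comm, mul_assoc]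
  congr 1
  rw [Finset.mul_sum]
  refine Finset.sum_congr rfl fun x _ => ?_
  rw [← Finset.mul_sum, sum_sgn_submodule]
  split_ifs <;> ring

/-- The counting step. The fibre of `φ` over `D₀` is the only one allowed to contain exactly one point
of `A`. -/
theorem two_mul_card_image_add_card_le {β ι : Type*} [DecidableEq β] [DecidableEq ι]
    (A B : Finset β) (hAB : A ⊆ B) (φ : β → ι) (D₀ : ι)
    (h : ∀ a ∈ A, φ a ≠ D₀ → ∃ a' ∈ A, a' ≠ a ∧ φ a' = φ a) :
    2 * (B.image φ).card + A.card ≤ 2 * B.card + 1 := by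
  have hA : A.card = ∑ D ∈ B.image φ, (A.filter (φ · = D)).card :=
    Finset.card_eq_sum_card_fiberwise fun a ha =>
      Finset.mem_coe.2 (Finset.mem_image_of_mem φ (hAB ha))
  have hB : B.card = ∑ D ∈ B.image φ, (B.filter (φ · = D)).card :=
    Finset.card_eq_sum_card_fiberwise fun a ha => Finset.mem_coe.2 (Finset.mem_image_of_mem φ ha)
  have hD : ∑ D ∈ B.image φ, (2 + (A.filter (φ · = D)).card) ≤
      ∑ D ∈ B.image φ, (2 * (B.filter (φ · = D)).card + if D = D₀ then 1 else 0) := by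
    refine Finset.sum_le_sum fun D hD => ?_
    have hle : (A.filter (φ · = D)).card ≤ (B.filter (φ · = D)).card :=
      Finset.card_le_card (Finset.filter_subset_filter _ hAB)
    have hpos : 0 < (B.filter (φ · = D)).card := by
      obtain ⟨x, hx, rfl⟩ := Finset.mem_image.1 hD
      exact Finset.card_pos.2 ⟨x, by simp [hx]⟩
    by_cases hD0 : D = D₀
    · simp only [hD0, if_true] at *
      omega
    · have hone : (A.filter (φ · = D)).card ≠ 1 := by
        intro h1
        obtain ⟨a, ha⟩ := Finset.card_eq_one.1 h1
        have haA : a ∈ A.filter (φ · = D) := by simp [ha]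
        rw [Finset.mem_filter] at haA
        obtain ⟨a', ha', hne, he⟩ := h a haA.1 (by rw [haA.2]; exact hD0)
        have : a' ∈ A.filter (φ · = D) := Finset.mem_filter.2 ⟨ha', he.trans haA.2⟩
        rw [ha] at this
        exact hne (Finset.mem_singleton.1 this)
      simp only [hD0, if_false]
      omega
  have hind : ∑ D ∈ B.image φ, (if D = D₀ then 1 else 0) ≤ 1 := by
    rw [Finset.sum_ite_eq']
    split_ifs <;> simp
  rw [Finset.sum_add_distrib, Finset.sum_add_distrib, ← Finset.mul_sum, ← hA, ← hB] at hD
  simp only [Finset.sum_const, smul_eq_mul] at hD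
  omega

/-- If `f` is constant on the translate by `x₀` of the annihilator of `K`, then a coset of `K` other
than `K` itself never contains exactly one point of the Fourier support. -/
theorem exists_ne_mem_fSupp {n : ℕ} (f : (Fin n → ZMod 2) → ℝ)
    (K : Submodule (ZMod 2) (DualF n)) (x₀ : Fin n → ZMod 2) (v : ℝ)
    (hv : ∀ x, (∀ h ∈ K, h (x + x₀) = 0) → f x = v) (η : DualF n) (hη : η ∈ fSupp n f)
    (hK : η ∉ K) : ∃ η' ∈ fSupp n f, η' ≠ η ∧ η' - η ∈ K := by
  classical
  have : Finite (DualF n) := DFunLike.finite _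
  have : Fintype K := Fintype.ofFinite K
  by_contra! hcon
  have hsum := sum_coset_fCoeff f K η x₀
  have hL : ∑ h : K, fCoeff n f (η + h.1) * sgn (h.1 x₀) = fCoeff n f η := by
    rw [Finset.sum_eq_single 0]
    · simp [sgn_zero]
    · intro h _ hh
      have : fCoeff n f (η + h.1) = 0 := by
        by_contra hne
        exact hcon _ hne (by simpa using hh) (by simp)
      rw [this, zero_mul]
    · simp
  -- A vector annihilated by `K` but not by `η`; translating by it flips the sign of the character.
  obtain ⟨z, hz, hz0⟩ : ∃ z, (∀ h ∈ K, h z = 0) ∧ η z ≠ 0 := by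
    by_contra! hc
    apply hK
    rw [← Subspace.dualCoannihilator_dualAnnihilator_eq (W := K), Submodule.mem_dualAnnihilator]
    intro w hw
    exact hc w fun h hh => (Submodule.mem_dualCoannihilator _).1 hw h hh
  have hR : ∑ x, (if ∀ h ∈ K, h (x + x₀) = 0 then f x * sgn (η x) else 0) = 0 := by
    refine sum_eq_zero_of_neg (Equiv.addRight z) _ fun x => ?_
    have hiff : (∀ h ∈ K, h (x + z + x₀) = 0) ↔ ∀ h ∈ K, h (x + x₀) = 0 := by
      refine forall₂_congr fun h hh => ?_
      rw [add_right_comm, map_add, hz h hh, add_zero]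
    simp only [Equiv.coe_addRight, hiff]
    split_ifs with hx
    · rw [hv x hx, hv (x + z) (hiff.2 hx), map_add, sgn_add, sgn_of_ne_zero hz0]
      ring
    · simp
  rw [hL, hR, mul_zero] at hsum
  exact hη hsum

/-- The Fourier support of a restriction is contained in the restriction of the Fourier support. -/
theorem fSupp_comp_subset {n r : ℕ} (f : (Fin n → ZMod 2) → ℝ)
    (L : (Fin r → ZMod 2) →ₗ[ZMod 2] (Fin n → ZMod 2)) (hL : Function.Injective L)
    (x₀ : Fin n → ZMod 2) :
    fSupp r (f ∘ fun y => x₀ + L y) ⊆ L.dualMap '' fSupp n f := by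
  classical
  have : Finite (DualF n) := DFunLike.finite _
  intro η hη
  obtain ⟨α, rfl⟩ := LinearMap.dualMap_surjective_of_injective hL η
  by_contra hcon
  apply hη
  let K : Submodule (ZMod 2) (DualF n) := LinearMap.ker L.dualMap
  have : Fintype K := Fintype.ofFinite K
  have hsum := sum_coset_fCoeff f K α x₀
  have hlhs : ∑ h : K, fCoeff n f (α + h.1) * sgn (h.1 x₀) = 0 := by
    refine Finset.sum_eq_zero fun h _ => ?_
    have : fCoeff n f (α + h.1) = 0 := by
      by_contra hne
      refine hcon ⟨α + h.1, hne, ?_⟩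
      rw [map_add, LinearMap.mem_ker.1 h.2, add_zero]
    rw [this, zero_mul]
  have hmem : ∀ x, (∀ h ∈ K, h (x + x₀) = 0) ↔ x ∈ Set.range fun y => x₀ + L y := by
    intro x
    have h1 : (∀ h ∈ K, h (x + x₀) = 0) ↔ x + x₀ ∈ LinearMap.range L := by
      rw [← Subspace.dualAnnihilator_dualCoannihilator_eq (W := LinearMap.range L),
        ← LinearMap.ker_dualMap_eq_dualAnnihilator_range, Submodule.mem_dualCoannihilator]
    rw [h1]
    -- In characteristic two `x + x₀ = L y` and `x = x₀ + L y` say the same.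
    have h2 : x₀ + x₀ = 0 := funext fun i => CharTwo.add_self_eq_zero (x₀ i)
    constructor
    · rintro ⟨y, hy⟩
      refine ⟨y, ?_⟩
      simp only [hy]
      rw [add_left_comm, h2, add_zero]
    · rintro ⟨y, rfl⟩
      refine ⟨y, ?_⟩
      rw [add_right_comm, h2, zero_add]
  have hinj : Function.Injective fun y => x₀ + L y := (add_right_injective x₀).comp hL
  have hrhs : ∑ x, (if ∀ h ∈ K, h (x + x₀) = 0 then f x * sgn (α x) else 0) =
      sgn (α x₀) * ∑ y, f (x₀ + L y) * sgn (L.dualMap α y) := by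
    rw [← Finset.sum_filter, Finset.mul_sum]
    symm
    refine Finset.sum_bij (fun y _ => x₀ + L y) ?_ ?_ ?_ ?_
    · intro y _
      rw [Finset.mem_filter, hmem]
      exact ⟨Finset.mem_univ _, y, rfl⟩
    · intro y _ y' _ h
      exact hinj h
    · intro x hx
      rw [Finset.mem_filter, hmem] at hx
      obtain ⟨y, hy⟩ := hx.2
      exact ⟨y, Finset.mem_univ _, hy⟩
    · intro y _
      rw [map_add, sgn_add, LinearMap.dualMap_apply]
      ring
  rw [hlhs, hrhs] at hsum
  have hcard : (Fintype.card K : ℝ) ≠ 0 := by exact_mod_cast Fintype.card_ne_zero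
  have hzero : ∑ y, f (x₀ + L y) * sgn (L.dualMap α y) = 0 := by
    have := hsum.symm
    simpa [hcard, sgn_ne_zero] using this
  have h3 : fCoeff r (f ∘ fun y => x₀ + L y) (L.dualMap α) =
      (2 ^ r : ℝ)⁻¹ * ∑ y, f (x₀ + L y) * sgn (L.dualMap α y) := rfl
  rw [h3, hzero, mul_zero]

/-- Suppose `f` has Fourier sparsity `s`, the forms `γ₁, …, γ_d` are linearly
independent with span `H`, and `l` cosets of `H` meet the Fourier support of `f`.
If the restriction of `f` to `V_b = {x : ∀ i, γᵢ x = bᵢ}` has Fourier sparsity `k`,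
and `f` is constant on a nonempty affine subspace
`{x ∈ V_b : δ₁ x = c₁, …, δ_m x = c_m}`, then with `H'` the span of
`{γ₁, …, γ_d, δ₁, …, δ_m}` and `l'` the number of cosets of `H'` meeting the
Fourier support of `f`, we have `l' ≤ l - (k-1)/2`. -/
theorem coset_count_reduction (n d m : ℕ) (f : (Fin n → ZMod 2) → ℝ)
    (hf : IsBooleanFn n f) (s : ℕ) (hs : s = fSpar n f)
    (γ : Fin d → DualF n) (hγ : LinearIndependent (ZMod 2) γ)
    (H : Submodule (ZMod 2) (DualF n)) (hH : H = Submodule.span (ZMod 2) (Set.range γ))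
    (l : ℕ)
    (hl : l = Set.ncard ((Submodule.Quotient.mk : DualF n → DualF n ⧸ H) '' fSupp n f))
    (b : Fin d → ZMod 2) (k : ℕ)
    (hk : ∃ P : (Fin (n - d) → ZMod 2) → (Fin n → ZMod 2),
      IsAffineParam n d γ b P ∧ k = fSpar (n - d) (f ∘ P))
    (δ : Fin m → DualF n) (c : Fin m → ZMod 2)
    (hne : ∃ x, (∀ i, γ i x = b i) ∧ (∀ j, δ j x = c j))
    (hconst : ∃ v : ℝ, ∀ x, (∀ i, γ i x = b i) → (∀ j, δ j x = c j) → f x = v)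
    (H' : Submodule (ZMod 2) (DualF n))
    (hH' : H' = Submodule.span (ZMod 2) (Set.range γ ∪ Set.range δ))
    (l' : ℕ)
    (hl' : l' = Set.ncard
      ((Submodule.Quotient.mk : DualF n → DualF n ⧸ H') '' fSupp n f)) :
    (l' : ℝ) ≤ (l : ℝ) - ((k : ℝ) - 1) / 2 := by
  classical
  have : Finite (DualF n) := DFunLike.finite _
  have : Finite (DualF (n - d)) := DFunLike.finite _
  obtain ⟨P, ⟨⟨L, x₀, rfl⟩, hinj, hrange⟩, rfl⟩ := hk
  obtain ⟨v, hv⟩ := hconst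
  obtain ⟨w, hwγ, hwδ⟩ := hne
  have hLinj : Function.Injective L := fun y y' h => hinj (by simp [h])
  have hP : ∀ y i, γ i (x₀ + L y) = b i := fun y i => by
    have : x₀ + L y ∈ {x | ∀ i, γ i x = b i} := hrange ▸ ⟨y, rfl⟩
    exact this i
  have hx₀ : ∀ i, γ i x₀ = b i := fun i => by simpa using hP 0 i
  have hker : LinearMap.ker L.dualMap = H := by
    rw [hH]
    apply le_antisymm
    · intro α hα
      refine mem_span_of_iInf_ker_le_ker fun z hz => ?_
      have hz' : ∀ i, γ i z = 0 := by simpa using hz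
      have : x₀ + z ∈ Set.range fun y => x₀ + L y := by
        rw [hrange]
        intro i
        rw [map_add, hz', hx₀, add_zero]
      obtain ⟨y, hy⟩ := this
      have hy' : L y = z := add_left_cancel hy
      rw [LinearMap.mem_ker, ← hy', ← LinearMap.dualMap_apply, LinearMap.mem_ker.1 hα]
      rfl
    · rw [Submodule.span_le]
      rintro _ ⟨i, rfl⟩
      refine LinearMap.mem_ker.2 (LinearMap.ext fun y => ?_)
      have := hP y i
      rw [map_add, hx₀] at this
      simpa using this
  have hHH' : H ≤ H' := by
    rw [hH, hH']
    exact Submodule.span_mono Set.subset_union_left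
  obtain ⟨y₀, hy₀⟩ : w ∈ Set.range fun y => x₀ + L y := by rw [hrange]; exact hwγ
  let K : Submodule (ZMod 2) (DualF (n - d)) := H'.map L.dualMap
  have hconstK : ∀ y, (∀ h ∈ K, h (y + y₀) = 0) → (f ∘ fun y => x₀ + L y) y = v := by
    intro y hy
    refine hv _ (hP y) fun j => ?_
    have hδ : δ j ∈ H' := hH' ▸ Submodule.subset_span (Or.inr ⟨j, rfl⟩)
    have h1 := hy _ (Submodule.mem_map_of_mem hδ)
    rw [LinearMap.dualMap_apply, map_add, map_add, CharTwo.add_eq_zero] at h1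
    rw [← hwδ j, ← hy₀, map_add, map_add, h1]
  let A : Set (DualF (n - d)) := fSupp (n - d) (f ∘ fun y => x₀ + L y)
  let B : Set (DualF (n - d)) := L.dualMap '' fSupp n f
  have hlB : B.ncard = l := by
    -- Cosets of `H` correspond to their images under `L.dualMap`, whose kernel is `H`.
    let ψ : (DualF n ⧸ H) → DualF (n - d) := H.liftQ L.dualMap hker.ge
    have hψ : Function.Injective ψ := by
      apply LinearMap.ker_eq_bot.1
      rw [Submodule.ker_liftQ, hker, Submodule.mkQ_map_self]
    rw [hl, ← Set.ncard_image_of_injective _ hψ, Set.image_image]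
    rfl
  have hl'B : l' ≤ ((Submodule.Quotient.mk : _ → DualF (n - d) ⧸ K) '' B).ncard := by
    let ψ : (DualF n ⧸ H') →ₗ[ZMod 2] (DualF (n - d) ⧸ K) :=
      H'.mapQ K L.dualMap (Submodule.le_comap_map _ _)
    have hψ : Function.Injective ψ := by
      rw [← LinearMap.ker_eq_bot, LinearMap.ker_eq_bot']
      intro q
      obtain ⟨α, rfl⟩ := Submodule.Quotient.mk_surjective _ q
      intro hq
      have hα : L.dualMap α ∈ K := (Submodule.Quotient.mk_eq_zero K).1 hq
      obtain ⟨β, hβ, he⟩ := hα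
      rw [Submodule.Quotient.mk_eq_zero]
      have hd : α - β ∈ H' := hHH' (hker ▸ LinearMap.sub_mem_ker_iff.2 he.symm)
      simpa using H'.add_mem hd hβ
    rw [hl', ← Set.ncard_image_of_injective _ hψ, Set.image_image, Set.image_image]
    rfl
  obtain ⟨A', hA'⟩ := (Set.toFinite A).exists_finset_coe
  obtain ⟨B', hB'⟩ := (Set.toFinite B).exists_finset_coe
  have hcount := two_mul_card_image_add_card_le A' B'
    (by rw [← Finset.coe_subset, hA', hB']; exact fSupp_comp_subset f L hLinj x₀)
    (Submodule.Quotient.mk : _ → DualF (n - d) ⧸ K) 0 (by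
      intro η hη h0
      rw [← Finset.mem_coe, hA'] at hη
      obtain ⟨η', h1, h2, h3⟩ := exists_ne_mem_fSupp _ K y₀ v hconstK η hη
        (fun h => h0 ((Submodule.Quotient.mk_eq_zero K).2 h))
      exact ⟨η', by rw [← Finset.mem_coe, hA']; exact h1, h2, (Submodule.Quotient.eq K).2 h3⟩)
  rw [← Set.ncard_coe_finset A', ← Set.ncard_coe_finset B', ← Set.ncard_coe_finset (B'.image _),
    Finset.coe_image, hA', hB', hlB] at hcount
  have hfin : 2 * l' + fSpar (n - d) (f ∘ fun y => x₀ + L y) ≤ 2 * l + 1 := by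
    have : fSpar (n - d) (f ∘ fun y => x₀ + L y) = A.ncard := rfl
    omega
  have hfin' : 2 * (l' : ℝ) + (fSpar (n - d) (f ∘ fun y => x₀ + L y) : ℝ) ≤ 2 * l + 1 := by
    exact_mod_cast hfin
  linarith
end

section
/- Let f : 𝔽₂ⁿ → {1,−1} be a Boolean function, let γ₁,…,γ_d be linearly independent linear forms with 𝔽₂-span H, and let l be the number of cosets of H in the dual space of 𝔽₂ⁿ meeting Supp(f̂). Then for every coset C of H with C ∩ Supp(f̂) ≠ ∅, there exists b ∈ 𝔽₂^d such that some character of V_b = {x : γᵢ(x)=bᵢ} arising from C appears in the Fourier support of f|_{V_b}; consequently, the total number of distinct cosets of H that contribute a nonzero Fourier coefficient to some restriction f|_{V_b}, over all b ∈ 𝔽₂^d, is exactly l. -/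
/-- The character `x ↦ (-1)^(α x)` of `𝔽₂ⁿ`, as a homomorphism from the multiplicative copy of
`𝔽₂ⁿ` to `ℝ`, the form in which Dedekind's theorem applies. -/
noncomputable def signChar {n : ℕ} (α : DualF n) : Multiplicative (Fin n → ZMod 2) →* ℝ where
  toFun x := (-1 : ℝ) ^ (α x.toAdd).val
  map_one' := by simp
  map_mul' x y := by
    have h : ∀ a b : ZMod 2, (-1 : ℝ) ^ (a + b).val = (-1) ^ a.val * (-1) ^ b.val := by
      intro a b
      rw [← pow_add, ZMod.val_add, ← neg_one_pow_eq_pow_mod_two]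
    simp only [toAdd_mul, map_add, h]

lemma signChar_injective {n : ℕ} : Function.Injective (signChar (n := n)) := by
  intro α β h
  have inj : ∀ a b : ZMod 2, (-1 : ℝ) ^ a.val = (-1) ^ b.val → a = b := by
    intro a b hab
    fin_cases a <;> fin_cases b <;> first | rfl | (exfalso; norm_num [ZMod.val] at hab)
  exact LinearMap.ext fun x => inj _ _ (DFunLike.congr_fun h (Multiplicative.ofAdd x))

/-- A combination of distinct characters with a nonzero coefficient is nonzero at some point. -/
lemma exists_sum_signs_ne_zero {n : ℕ} (S : Set (DualF n)) (c : DualF n → ℝ) {β : DualF n}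
    (hβ : β ∈ S) (hc : c β ≠ 0) :
    ∃ x : Fin n → ZMod 2, (∑ᶠ α ∈ S, c α * (-1 : ℝ) ^ (α x).val) ≠ 0 := by
  by_contra! h
  have hfin : Finite (DualF n) := DFunLike.finite _
  have hli := (linearIndependent_monoidHom (Multiplicative (Fin n → ZMod 2)) ℝ).comp
    signChar signChar_injective
  refine hc ((linearIndependent_iff'.1 hli) S.toFinite.toFinset c ?_ β (by simpa using hβ))
  ext x
  have hx := h x.toAdd
  rw [finsum_mem_eq_finite_toFinset_sum _ S.toFinite] at hx
  simpa [Finset.sum_apply, signChar] using hx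

/-- Let `γ₁, …, γ_d` be linearly independent forms with span `H` and let `l` be the
number of cosets of `H` meeting the Fourier support of `f`.  For `x₀ ∈ V_b`, the
Fourier coefficient of `f|_{V_b}` associated with the coset of `β` is
`Σ_{α ∈ Supp(f̂), α - β ∈ H} f̂(α)·(-1)^(α x₀)` (its vanishing is independent of the
choice of `x₀ ∈ V_b`).  Then:
(1) every coset meeting `Supp(f̂)` contributes a nonzero coefficient to `f|_{V_b}`
for some `b`; and (2) the number of distinct cosets of `H` contributing a nonzero
coefficient to some restriction `f|_{V_b}`, over all `b ∈ 𝔽₂^d`, is exactly `l`. -/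
theorem every_coset_contributes (n d : ℕ) (f : (Fin n → ZMod 2) → ℝ)
    (hf : IsBooleanFn n f)
    (γ : Fin d → DualF n) (hγ : LinearIndependent (ZMod 2) γ)
    (H : Submodule (ZMod 2) (DualF n)) (hH : H = Submodule.span (ZMod 2) (Set.range γ))
    (l : ℕ)
    (hl : l = Set.ncard ((Submodule.Quotient.mk : DualF n → DualF n ⧸ H) '' fSupp n f)) :
    (∀ β ∈ fSupp n f,
      ∃ (b : Fin d → ZMod 2) (x₀ : Fin n → ZMod 2), (∀ i, γ i x₀ = b i) ∧
        (∑ᶠ α ∈ {α : DualF n | α ∈ fSupp n f ∧ α - β ∈ H},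
          fCoeff n f α * (-1 : ℝ) ^ (α x₀).val) ≠ 0) ∧
    Set.ncard {cQ : DualF n ⧸ H |
      ∃ (b : Fin d → ZMod 2) (x₀ : Fin n → ZMod 2), (∀ i, γ i x₀ = b i) ∧
        (∑ᶠ α ∈ {α : DualF n | α ∈ fSupp n f ∧ Submodule.Quotient.mk α = cQ},
          fCoeff n f α * (-1 : ℝ) ^ (α x₀).val) ≠ 0} = l := by
  refine ⟨fun β hβ => ?_, ?_⟩
  · obtain ⟨x, hx⟩ := exists_sum_signs_ne_zero {α : DualF n | α ∈ fSupp n f ∧ α - β ∈ H}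
      (fCoeff n f) (β := β) ⟨hβ, by simp⟩ hβ
    exact ⟨fun i => γ i x, x, fun _ => rfl, hx⟩
  · rw [hl]
    congr 1
    ext cQ
    constructor
    · rintro ⟨b, x, -, hx⟩
      obtain ⟨α, hα, -⟩ := exists_ne_zero_of_finsum_mem_ne_zero hx
      exact ⟨α, hα.1, hα.2⟩
    · rintro ⟨β, hβ, rfl⟩
      obtain ⟨x, hx⟩ := exists_sum_signs_ne_zero
        {α : DualF n | α ∈ fSupp n f ∧
          (Submodule.Quotient.mk α : DualF n ⧸ H) = Submodule.Quotient.mk β}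
        (fCoeff n f) (β := β) ⟨hβ, rfl⟩ hβ
      exact ⟨fun i => γ i x, x, fun _ => rfl, hx⟩
end

section
/- Let s ≥ 1 be a real number and let (l_i)_{i≥1} be a sequence of nonnegative real numbers satisfying l₁ ≤ s and l_{m+1} ≤ l_m − l_m²/(4s) for every m ≥ 1. Then l_i ≤ 4s/i for every i ≥ 1. -/
/-- Arithmetic core of the sparsity-reduction analysis: if `l₁ ≤ s` and the
nonnegative sequence satisfies `l_{m+1} ≤ l_m - l_m² / (4s)` for all `m ≥ 1`,
then `l_i ≤ 4s / i` for all `i ≥ 1`. -/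
theorem sequence_decay (s : ℝ) (hs : 1 ≤ s) (l : ℕ → ℝ)
    (hnonneg : ∀ i, 1 ≤ i → 0 ≤ l i)
    (h1 : l 1 ≤ s)
    (hrec : ∀ m, 1 ≤ m → l (m + 1) ≤ l m - (l m) ^ 2 / (4 * s)) :
    ∀ i, 1 ≤ i → l i ≤ 4 * s / i := by
  have hc : 0 < 4 * s := by linarith
  intro i hi
  have hpos : (0 : ℝ) < i := by exact_mod_cast hi
  rw [le_div_iff₀ hpos]
  clear hpos
  induction i, hi using Nat.le_induction with
  | base => push_cast; linarith
  | succ m hm ih =>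
    have hm1 : (1 : ℝ) ≤ m := by exact_mod_cast hm
    have hx := hnonneg m hm
    have hxc : l m ≤ 4 * s := (le_mul_of_one_le_right hx hm1).trans ih
    push_cast
    refine (mul_le_mul_of_nonneg_right (hrec m hm) (by positivity)).trans ?_
    -- With `c = 4s` and `x = l m`, the gap `c - (m + 1) (x - x² / c)` equals
    -- `((c - m x) (c - x) + x²) / c`, and both factors of the product are nonnegative.
    have key : 4 * s - (l m - l m ^ 2 / (4 * s)) * (m + 1)
        = ((4 * s - l m * m) * (4 * s - l m) + l m ^ 2) / (4 * s) := by
      field_simp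
      ring
    have hgap : 0 ≤ ((4 * s - l m * m) * (4 * s - l m) + l m ^ 2) / (4 * s) :=
      div_nonneg (add_nonneg (mul_nonneg (sub_nonneg.2 ih) (sub_nonneg.2 hxc)) (sq_nonneg _)) hc.le
    linarith
end

section
/- For every m ≥ 1, the ±1-valued address function Add : 𝔽₂^m × (𝔽₂^m → 𝔽₂) → {1,−1} defined by Add(x, y) = (−1)^{y(x)} (where x is the m-bit address and y assigns a bit to each of the 2^m addresses) has Fourier sparsity exactly 4^m and Fourier dimension at least 2^m; in particular its Fourier dimension is at least the square root of its Fourier sparsity. -/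
/-!
Write a linear form on `AddrDom m` as `(x, y) ↦ A x + B y`. Then
`∑ z, Add z * (-1)^(γ z) = ∑ x, (-1)^(A x) * ∑ y, (-1)^(y x + B y)`, and the inner sum is a character
sum over a vector space: it is `2^(2^m)` if `B` is evaluation at `x`, and `0` otherwise. As
evaluations at distinct points are distinct, at most one `x` contributes, so the coefficient is
nonzero exactly when `B` is an evaluation (`addressFn_support_eq`). The support is therefore
in bijection with pairs (address, linear form on `𝔽₂^m`), of which there are `2^m * 2^m`. It contains
the `2^m` forms `(x, y) ↦ y v`, which are linearly independent; this bounds the dimension.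
-/

/-- The domain of the address function: an `m`-bit address together with an
assignment of a bit to each of the `2^m` addresses; this 𝔽₂-vector space is
identified with `𝔽₂^(m + 2^m)`. -/
abbrev AddrDom (m : ℕ) : Type := (Fin m → ZMod 2) × ((Fin m → ZMod 2) → ZMod 2)

/-- The `±1`-valued address function: `Add (x, y) = (-1)^(y x)`. -/
noncomputable def addressFn (m : ℕ) : AddrDom m → ℝ :=
  fun z => (-1 : ℝ) ^ (z.2 z.1).val

/-- Fourier coefficient of `f : AddrDom m → ℝ` at a linear form `γ`. -/
noncomputable def addrFourierCoeff (m : ℕ) (f : AddrDom m → ℝ)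
    (γ : AddrDom m →ₗ[ZMod 2] ZMod 2) : ℝ :=
  ((Fintype.card (AddrDom m) : ℝ))⁻¹ * ∑ z : AddrDom m, f z * (-1 : ℝ) ^ (γ z).val

/-- Fourier support of `f : AddrDom m → ℝ`. -/
noncomputable def addrFourierSupport (m : ℕ) (f : AddrDom m → ℝ) :
    Set (AddrDom m →ₗ[ZMod 2] ZMod 2) :=
  {γ | addrFourierCoeff m f γ ≠ 0}

theorem neg_one_pow_val_add (a b : ZMod 2) :
    (-1 : ℝ) ^ (a + b).val = (-1) ^ a.val * (-1) ^ b.val := by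
  rw [ZMod.val_add, ← neg_one_pow_eq_pow_mod_two, pow_add]

/-- A nontrivial additive character of an 𝔽₂-vector space sums to zero: translating by a vector
on which the form is `1` negates the sum. -/
theorem sum_neg_one_pow_eq_zero {V : Type*} [Fintype V] [AddCommGroup V] [Module (ZMod 2) V]
    (φ : V →ₗ[ZMod 2] ZMod 2) (hφ : φ ≠ 0) : ∑ v, (-1 : ℝ) ^ (φ v).val = 0 := by
  obtain ⟨w, hw⟩ : ∃ w, φ w ≠ 0 := by
    by_contra! h
    exact hφ (LinearMap.ext h)
  have hw1 : φ w = 1 := Fin.eq_one_of_ne_zero _ hw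
  have h := Equiv.sum_comp (Equiv.addRight w) (fun v => (-1 : ℝ) ^ (φ v).val)
  simp only [Equiv.coe_addRight, map_add, neg_one_pow_val_add, hw1, ZMod.val_one, pow_one,
    mul_neg, mul_one, Finset.sum_neg_distrib] at h
  linarith

/-- The linear form `(x, y) ↦ A x + y v` on the domain of the address function. -/
noncomputable def addrForm (m : ℕ) (p : (Fin m → ZMod 2) × ((Fin m → ZMod 2) →ₗ[ZMod 2] ZMod 2)) :
    AddrDom m →ₗ[ZMod 2] ZMod 2 :=
  p.2.coprod (LinearMap.proj p.1)

theorem proj_injective (m : ℕ) : Function.Injective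
    (fun v : Fin m → ZMod 2 =>
      (LinearMap.proj v : ((Fin m → ZMod 2) → ZMod 2) →ₗ[ZMod 2] ZMod 2)) := by
  intro v w h
  have h1 := LinearMap.congr_fun h (Pi.single v 1)
  by_contra hne
  simp [Ne.symm hne] at h1

theorem addrForm_injective (m : ℕ) : Function.Injective (addrForm m) := by
  rintro ⟨v, A⟩ ⟨w, B⟩ h
  have hA : A = B := by
    have := congrArg (fun γ => γ ∘ₗ LinearMap.inl _ _ _) h
    simpa [addrForm] using this
  have hv : v = w := by
    apply proj_injective m
    have := congrArg (fun γ => γ ∘ₗ LinearMap.inr _ _ _) h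
    simpa [addrForm] using this
  rw [hA, hv]

/-- The character sum for fixed address `x`, where `B` is the part of the form acting on `y`. -/
theorem fixed_address_sum (m : ℕ) (x : Fin m → ZMod 2)
    (B : ((Fin m → ZMod 2) → ZMod 2) →ₗ[ZMod 2] ZMod 2) [Decidable (B = LinearMap.proj x)] :
    ∑ y : (Fin m → ZMod 2) → ZMod 2, (-1 : ℝ) ^ (y x).val * (-1) ^ (B y).val =
      if B = LinearMap.proj x then (Fintype.card ((Fin m → ZMod 2) → ZMod 2) : ℝ) else 0 := by
  split_ifs with h
  · subst h
    simp [← mul_pow]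
  · rw [← sum_neg_one_pow_eq_zero (LinearMap.proj x + B)]
    · simp [neg_one_pow_val_add]
    · intro h0
      apply h
      ext1 v
      have h1 := LinearMap.congr_fun h0 (Pi.single v 1)
      ext
      simp only [LinearMap.add_apply, LinearMap.zero_apply] at h1
      simpa using (CharTwo.add_eq_zero.mp h1).symm

/-- The Fourier support consists of the forms whose part acting on `y` is an evaluation. -/
theorem addressFn_support_eq (m : ℕ) :
    addrFourierSupport m (addressFn m) = Set.range (addrForm m) := by
  classical
  ext γ
  set A := γ ∘ₗ LinearMap.inl (ZMod 2) (Fin m → ZMod 2) ((Fin m → ZMod 2) → ZMod 2) with hA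
  set B := γ ∘ₗ LinearMap.inr (ZMod 2) (Fin m → ZMod 2) ((Fin m → ZMod 2) → ZMod 2) with hB
  have hγ : γ = A.coprod B := (LinearMap.coprod_comp_inl_inr γ).symm
  have hsum : ∑ z : AddrDom m, addressFn m z * (-1 : ℝ) ^ (γ z).val =
      ∑ x, (-1 : ℝ) ^ (A x).val * if B = LinearMap.proj x then
        (Fintype.card ((Fin m → ZMod 2) → ZMod 2) : ℝ) else 0 := by
    rw [Fintype.sum_prod_type]
    refine Finset.sum_congr rfl fun x _ => ?_
    rw [← fixed_address_sum, Finset.mul_sum]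
    refine Finset.sum_congr rfl fun y _ => ?_
    rw [hγ, LinearMap.coprod_apply, neg_one_pow_val_add, addressFn]
    ring
  have hmem : γ ∈ Set.range (addrForm m) ↔ ∃ x, B = LinearMap.proj x := by
    constructor
    · rintro ⟨⟨x, C⟩, h⟩
      exact ⟨x, by rw [hB, ← h]; simp [addrForm]⟩
    · rintro ⟨x, h⟩
      exact ⟨(x, A), by rw [hγ, h]; rfl⟩
  rw [hmem]
  change addrFourierCoeff m (addressFn m) γ ≠ 0 ↔ _
  rw [addrFourierCoeff, hsum]
  constructor
  · intro h
    by_contra! hne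
    exact h (by simp [hne])
  · rintro ⟨x, hx⟩
    have hiff (w : Fin m → ZMod 2) : B = LinearMap.proj w ↔ x = w := by
      rw [hx]
      exact (proj_injective m).eq_iff
    simp only [hiff, mul_ite, mul_zero, Finset.sum_ite_eq, Finset.mem_univ, if_true]
    have h1 : (Fintype.card (AddrDom m) : ℝ) ≠ 0 := Nat.cast_ne_zero.mpr Fintype.card_ne_zero
    have h2 : (Fintype.card ((Fin m → ZMod 2) → ZMod 2) : ℝ) ≠ 0 :=
      Nat.cast_ne_zero.mpr Fintype.card_ne_zero
    exact mul_ne_zero (inv_ne_zero h1) (mul_ne_zero (pow_ne_zero _ (by norm_num)) h2)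

theorem addressFn_ncard (m : ℕ) :
    Set.ncard (addrFourierSupport m (addressFn m)) = 4 ^ m := by
  have hdual : Nat.card ((Fin m → ZMod 2) →ₗ[ZMod 2] ZMod 2) = 2 ^ m := by
    rw [Module.natCard_eq_pow_finrank (K := ZMod 2), Module.finrank_linearMap]
    simp
  rw [addressFn_support_eq, ← Set.image_univ, Set.ncard_image_of_injective _ (addrForm_injective m),
    Set.ncard_univ, Nat.card_prod, hdual]
  simp [← mul_pow]

theorem addressFn_le_finrank (m : ℕ) :
    2 ^ m ≤ Module.finrank (ZMod 2)
      (Submodule.span (ZMod 2) (addrFourierSupport m (addressFn m))) := by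
  have hli : LinearIndependent (ZMod 2) (fun v : Fin m → ZMod 2 => addrForm m (v, 0)) := by
    rw [Fintype.linearIndependent_iff]
    intro g hg v
    -- Evaluating at `(0, indicator of v)` isolates the coefficient of `v`.
    have := LinearMap.congr_fun hg (0, Pi.single v 1)
    simpa [addrForm, LinearMap.sum_apply, Pi.single_apply] using this
  have hcard := finrank_span_eq_card hli
  have hle := Submodule.finrank_mono (Submodule.span_mono (R := ZMod 2)
    (show Set.range (fun v : Fin m → ZMod 2 => addrForm m (v, 0)) ⊆
        addrFourierSupport m (addressFn m) by
      rw [addressFn_support_eq]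
      rintro _ ⟨v, rfl⟩
      exact ⟨_, rfl⟩))
  rw [hcard] at hle
  simpa using hle

/-- The address function has Fourier sparsity exactly `4^m` and Fourier dimension at
least `2^m`; in particular its Fourier dimension is at least the square root of its
Fourier sparsity. -/
theorem addressFn_sparsity_dimension (m : ℕ) (hm : 1 ≤ m) :
    Set.ncard (addrFourierSupport m (addressFn m)) = 4 ^ m ∧
    2 ^ m ≤ Module.finrank (ZMod 2)
      (Submodule.span (ZMod 2) (addrFourierSupport m (addressFn m))) ∧
    Real.sqrt (Set.ncard (addrFourierSupport m (addressFn m))) ≤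
      (Module.finrank (ZMod 2)
        (Submodule.span (ZMod 2) (addrFourierSupport m (addressFn m))) : ℝ) := by
  refine ⟨addressFn_ncard m, addressFn_le_finrank m, ?_⟩
  rw [addressFn_ncard]
  have h : ((2 ^ m : ℕ) : ℝ) ≤ _ := Nat.cast_le.mpr (addressFn_le_finrank m)
  refine le_trans (le_of_eq ?_) h
  rw [Real.sqrt_eq_iff_mul_self_eq (by positivity) (by positivity)]
  push_cast
  rw [← mul_pow]
  norm_num
end
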